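/- Let ν be a Lévy measure on ℝ^d (ν({0}) = 0, ∫min(1,|z|²)ν(dz) < ∞) and set ψ̃(x) = ∫(1 - cos⟨x,z⟩)ν(dz). Then for all r > 0: (1/(4(1+2d)))·∫min(1, (|z|r)²)ν(dz) ≤ sup_{|x| ≤ r} ψ̃(x) ≤ 2·∫min(1, (|z|r)²)ν(dz). -/

import Mathlib

open MeasureTheory Set
open scoped RealInnerProductSpace

/-!
For `‖x‖ ≤ r`, the upper bound integrates `1 - cos u ≤ 2 min(1, u²)` at `u = ⟪x, z⟫`.

For the lower bound, averaging `ψ` along the segment from `0` to `x` replaces the cosine by a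
function vanishing only at the origin: `∫₀¹ ψ(t x) dt = ∫ (1 - sinc ⟪x, z⟫) ν(dz)`, and
`min(1, u²) ≤ 8 (1 - sinc u)`. Taking `x = r e` for `e` in an orthonormal basis and summing, the
subadditivity of `min(1, ·)` bounds the truncated second moment by `8 d sup ψ`.
-/

section RealInequalities

theorem one_sub_cos_le_two_mul_min_one_sq (u : ℝ) : 1 - Real.cos u ≤ 2 * min 1 (u ^ 2) := by
  rw [mul_min_of_nonneg _ _ zero_le_two]
  refine le_min ?_ ?_
  · linarith [Real.neg_one_le_cos u]
  · linarith [Real.one_sub_sq_div_two_le_cos (x := u), sq_nonneg u]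

theorem intervalIntegral_one_sub_cos_mul (u : ℝ) :
    ∫ t in (0 : ℝ)..1, (1 - Real.cos (t * u)) = 1 - Real.sinc u := by
  rcases eq_or_ne u 0 with rfl | hu
  · simp
  · rw [intervalIntegral.integral_sub (by simp)
      (Continuous.intervalIntegrable (by fun_prop) _ _),
      intervalIntegral.integral_comp_mul_right _ hu]
    simp [Real.sinc_of_ne_zero hu, div_eq_inv_mul]

theorem one_sub_sinc_le_two_mul_min_one_sq (u : ℝ) : 1 - Real.sinc u ≤ 2 * min 1 (u ^ 2) := by
  have one_sub_cos_le : ∀ t ∈ Icc (0 : ℝ) 1, 1 - Real.cos (t * u) ≤ 2 * min 1 (u ^ 2) := by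
    intro t ht
    refine (one_sub_cos_le_two_mul_min_one_sq _).trans ?_
    rw [mul_pow]
    gcongr
    exact mul_le_of_le_one_left (sq_nonneg u) (pow_le_one₀ ht.1 ht.2)
  calc 1 - Real.sinc u = ∫ t in (0 : ℝ)..1, (1 - Real.cos (t * u)) :=
        (intervalIntegral_one_sub_cos_mul u).symm
    _ ≤ ∫ _ in (0 : ℝ)..1, 2 * min 1 (u ^ 2) :=
        intervalIntegral.integral_mono_on zero_le_one
          (Continuous.intervalIntegrable (by fun_prop) _ _) (by simp) one_sub_cos_le
    _ = 2 * min 1 (u ^ 2) := by simp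

theorem sin_le_sub_pow_three_div_eight {u : ℝ} (hu : 0 ≤ u) (hu₁ : u ≤ 1) :
    Real.sin u ≤ u - u ^ 3 / 8 := by
  have taylor := (abs_le.1 (Real.sin_bound (x := u) (by rwa [abs_of_nonneg hu]))).2
  rw [abs_of_nonneg hu] at taylor
  have : u ^ 5 ≤ u ^ 3 := pow_le_pow_of_le_one hu hu₁ (by norm_num)
  linarith [pow_nonneg hu 3]

theorem sin_le_seven_eighths_mul {u : ℝ} (hu : 1 ≤ u) : Real.sin u ≤ 7 / 8 * u := by
  rcases le_total u (8 / 7) with hu' | hu'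
  · have sin_one_le : Real.sin 1 ≤ 6 / 7 := by
      have taylor := (abs_le.1 (Real.sin_bound (x := 1) (by simp))).2
      norm_num at taylor
      linarith
    have lipschitz := (abs_le.1 (Real.abs_sin_sub_sin_le u 1)).2
    rw [abs_of_nonneg (by linarith)] at lipschitz
    linarith
  · linarith [Real.sin_le_one u]

theorem min_one_sq_le_eight_mul_one_sub_sinc (u : ℝ) :
    min 1 (u ^ 2) ≤ 8 * (1 - Real.sinc u) := by
  wlog hu : 0 ≤ u generalizing u
  · simpa [Real.sinc_neg] using this (-u) (by linarith)
  rcases hu.eq_or_lt with rfl | hu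
  · simp
  rw [Real.sinc_of_ne_zero hu.ne']
  rcases le_total u 1 with hu₁ | hu₁
  · have : Real.sin u / u ≤ 1 - u ^ 2 / 8 := by
      rw [div_le_iff₀ hu]
      linarith [sin_le_sub_pow_three_div_eight hu.le hu₁]
    linarith [min_le_right 1 (u ^ 2)]
  · have : Real.sin u / u ≤ 7 / 8 := (div_le_iff₀ hu).2 (sin_le_seven_eighths_mul hu₁)
    linarith [min_le_left 1 (u ^ 2)]

end RealInequalities

theorem min_sum_le_sum_min {ι M : Type*} [AddCommMonoid M] [LinearOrder M] [IsOrderedAddMonoid M]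
    {s : Finset ι} {a : ι → M} {c : M} (hc : 0 ≤ c) (ha : ∀ i ∈ s, 0 ≤ a i) :
    min c (∑ i ∈ s, a i) ≤ ∑ i ∈ s, min c (a i) := by
  refine Finset.le_sum_of_subadditive_on_pred (min c) (0 ≤ ·) (min_le_right c 0) ?_
    (fun _ _ => add_nonneg) a ha
  intro x y hx hy
  rcases le_total c x with hcx | hxc
  · rw [min_eq_left hcx]
    exact (min_le_left _ _).trans (le_add_of_nonneg_right (le_min hc hy))
  · rcases le_total c y with hcy | hyc
    · rw [min_eq_left hcy]
      exact (min_le_left _ _).trans (le_add_of_nonneg_left (le_min hc hx))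
    · rw [min_eq_right hxc, min_eq_right hyc]
      exact min_le_right _ _

theorem sigmaFinite_restrict_support {α F : Type*} [MeasurableSpace α] [NormedAddCommGroup F]
    {μ : Measure α} {f : α → F} (hf : Integrable f μ) :
    SigmaFinite (μ.restrict (Function.support f)) := by
  obtain ⟨t, ht, hzero, _⟩ := hf.aefinStronglyMeasurable.exists_set_sigmaFinite
  refine Measure.sigmaFinite_of_le (μ.restrict t) (Measure.restrict_mono_ae ?_)
  filter_upwards [(ae_restrict_iff' ht.compl).1 hzero] with x hx hfx
  by_contra hxt
  exact hfx (hx hxt)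

theorem setIntegral_compl_singleton_eq_integral {α F : Type*} [MeasurableSpace α]
    [NormedAddCommGroup F] [NormedSpace ℝ F] {μ : Measure α} {f : α → F} {a : α} (hf : f a = 0) :
    ∫ x in {a}ᶜ, f x ∂μ = ∫ x, f x ∂μ :=
  setIntegral_eq_integral_of_forall_compl_eq_zero fun x hx => by
    obtain rfl : x = a := by simpa using hx
    exact hf

theorem norm_smul_le_norm_of_mem_Icc {E : Type*} [SeminormedAddCommGroup E] [NormedSpace ℝ E]
    {t : ℝ} (ht : t ∈ Icc 0 1) (x : E) : ‖t • x‖ ≤ ‖x‖ := by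
  rw [norm_smul, Real.norm_of_nonneg ht.1]
  exact mul_le_of_le_one_left (norm_nonneg x) ht.2

section NormedAddCommGroup

variable {E : Type*} [NormedAddCommGroup E] [MeasurableSpace E] {ν : Measure E}

theorem integrable_min_one_norm_mul_sq [OpensMeasurableSpace E]
    (hν : Integrable (fun z => min 1 (‖z‖ ^ 2)) ν) (r : ℝ) :
    Integrable (fun z => min 1 ((‖z‖ * r) ^ 2)) ν := by
  refine (hν.const_mul (max 1 (r ^ 2))).mono'
    (Continuous.aestronglyMeasurable (by fun_prop)) (.of_forall fun z => ?_)
  rw [Real.norm_of_nonneg (by positivity), mul_min_of_nonneg _ _ (by positivity), mul_pow, mul_one,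
    mul_comm (‖z‖ ^ 2)]
  gcongr
  · exact le_max_left _ _
  · exact le_max_right _ _

theorem sigmaFinite_restrict_compl_zero (hν : Integrable (fun z => min 1 (‖z‖ ^ 2)) ν) :
    SigmaFinite (ν.restrict {0}ᶜ) := by
  have support_eq : Function.support (fun z : E => min 1 (‖z‖ ^ 2)) = {0}ᶜ := by
    ext z
    rcases eq_or_ne z 0 with rfl | hz
    · simp
    · have : 0 < min 1 (‖z‖ ^ 2) := by positivity
      simp [hz, this.ne']
  rw [← support_eq]
  exact sigmaFinite_restrict_support hν

end NormedAddCommGroup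

section InnerProductSpace

variable {E : Type*} [NormedAddCommGroup E] [InnerProductSpace ℝ E]

theorem min_one_inner_sq_le {r : ℝ} {x : E} (hx : ‖x‖ ≤ r) (z : E) :
    min 1 (⟪x, z⟫ ^ 2) ≤ min 1 ((‖z‖ * r) ^ 2) := by
  have abs_inner_le : |⟪x, z⟫| ≤ ‖z‖ * r := by
    calc |⟪x, z⟫| ≤ ‖x‖ * ‖z‖ := abs_real_inner_le_norm x z
      _ ≤ ‖z‖ * r := by rw [mul_comm]; gcongr
  rw [← sq_abs]
  gcongr

theorem min_one_norm_mul_sq_le_sum_one_sub_sinc {ι : Type*} [Fintype ι]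
    (b : OrthonormalBasis ι ℝ E) (z : E) (r : ℝ) :
    min 1 ((‖z‖ * r) ^ 2) ≤ ∑ i, 8 * (1 - Real.sinc ⟪r • b i, z⟫) :=
  calc min 1 ((‖z‖ * r) ^ 2) = min 1 (∑ i, ⟪r • b i, z⟫ ^ 2) := by
        simp only [real_inner_smul_left, mul_pow, ← Finset.mul_sum, b.sum_sq_inner_right,
          mul_comm]
    _ ≤ ∑ i, min 1 (⟪r • b i, z⟫ ^ 2) :=
        min_sum_le_sum_min zero_le_one fun _ _ => sq_nonneg _
    _ ≤ ∑ i, 8 * (1 - Real.sinc ⟪r • b i, z⟫) :=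
        Finset.sum_le_sum fun _ _ => min_one_sq_le_eight_mul_one_sub_sinc _

variable [MeasurableSpace E]

/-- The real part of the characteristic exponent of the pure-jump Lévy process with Lévy measure
`ν`; it is the whole exponent when `ν` is symmetric. -/
noncomputable def jumpExponent (ν : Measure E) (x : E) : ℝ :=
  ∫ z, (1 - Real.cos ⟪x, z⟫) ∂ν

variable {ν : Measure E}

@[simp]
theorem jumpExponent_zero : jumpExponent ν 0 = 0 := by
  simp [jumpExponent]

theorem jumpExponent_nonneg (x : E) : 0 ≤ jumpExponent ν x :=
  integral_nonneg fun _ => sub_nonneg.2 (Real.cos_le_one _)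

theorem jumpExponent_restrict_compl_zero (x : E) :
    jumpExponent (ν.restrict {0}ᶜ) x = jumpExponent ν x :=
  setIntegral_compl_singleton_eq_integral (by simp)

variable [OpensMeasurableSpace E]

theorem integrable_comp_inner {φ : ℝ → ℝ} {C : ℝ} (hφ : Continuous φ)
    (hφ_le : ∀ u, |φ u| ≤ C * min 1 (u ^ 2))
    (hν : Integrable (fun z => min 1 (‖z‖ ^ 2)) ν) (x : E) :
    Integrable (fun z => φ ⟪x, z⟫) ν := by
  have hC : 0 ≤ C := by simpa using (abs_nonneg _).trans (hφ_le 1)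
  refine ((integrable_min_one_norm_mul_sq hν ‖x‖).const_mul C).mono'
    (Continuous.aestronglyMeasurable (by fun_prop)) (.of_forall fun z => (hφ_le _).trans ?_)
  gcongr ?_ * ?_
  exact min_one_inner_sq_le le_rfl z

theorem integrable_one_sub_cos_inner (hν : Integrable (fun z => min 1 (‖z‖ ^ 2)) ν) (x : E) :
    Integrable (fun z => 1 - Real.cos ⟪x, z⟫) ν :=
  integrable_comp_inner (φ := fun u => 1 - Real.cos u) (by fun_prop)
    (fun u => by
      rw [abs_of_nonneg (sub_nonneg.2 (Real.cos_le_one u))]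
      exact one_sub_cos_le_two_mul_min_one_sq u) hν x

theorem integrable_one_sub_sinc_inner (hν : Integrable (fun z => min 1 (‖z‖ ^ 2)) ν) (x : E) :
    Integrable (fun z => 1 - Real.sinc ⟪x, z⟫) ν :=
  integrable_comp_inner (φ := fun u => 1 - Real.sinc u)
    (continuous_const.sub Real.continuous_sinc)
    (fun u => by
      rw [abs_of_nonneg (sub_nonneg.2 (Real.sinc_le_one u))]
      exact one_sub_sinc_le_two_mul_min_one_sq u) hν x

theorem jumpExponent_le_two_mul_integral (hν : Integrable (fun z => min 1 (‖z‖ ^ 2)) ν)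
    {r : ℝ} {x : E} (hx : ‖x‖ ≤ r) :
    jumpExponent ν x ≤ 2 * ∫ z, min 1 ((‖z‖ * r) ^ 2) ∂ν := by
  rw [← integral_const_mul]
  refine integral_mono (integrable_one_sub_cos_inner hν x)
    ((integrable_min_one_norm_mul_sq hν r).const_mul 2) fun z => ?_
  calc 1 - Real.cos ⟪x, z⟫ ≤ 2 * min 1 (⟪x, z⟫ ^ 2) := one_sub_cos_le_two_mul_min_one_sq _
    _ ≤ 2 * min 1 ((‖z‖ * r) ^ 2) := by
        gcongr ?_ * ?_
        exact min_one_inner_sq_le hx z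

theorem integrable_prod_one_sub_cos_mul_inner [SFinite ν]
    (hν : Integrable (fun z => min 1 (‖z‖ ^ 2)) ν) (x : E) :
    Integrable (fun p : ℝ × E => 1 - Real.cos (p.1 * ⟪x, p.2⟫))
      ((volume.restrict (Ioc 0 1)).prod ν) := by
  refine (((integrable_min_one_norm_mul_sq hν ‖x‖).const_mul 2).comp_snd _).mono'
    (Continuous.aestronglyMeasurable (by fun_prop)) ?_
  have fst_mem : ∀ᵐ p ∂((volume.restrict (Ioc (0 : ℝ) 1)).prod ν), p.1 ∈ Ioc (0 : ℝ) 1 :=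
    Measure.quasiMeasurePreserving_fst.ae (ae_restrict_mem measurableSet_Ioc)
  filter_upwards [fst_mem] with p hp
  rw [Real.norm_of_nonneg (sub_nonneg.2 (Real.cos_le_one _)), ← real_inner_smul_left]
  refine (one_sub_cos_le_two_mul_min_one_sq _).trans ?_
  gcongr ?_ * ?_
  exact min_one_inner_sq_le (norm_smul_le_norm_of_mem_Icc (Ioc_subset_Icc_self hp) x) p.2

theorem intervalIntegral_jumpExponent_smul (hν : Integrable (fun z => min 1 (‖z‖ ^ 2)) ν) (x : E) :
    ∫ t in (0 : ℝ)..1, jumpExponent ν (t • x) = ∫ z, (1 - Real.sinc ⟪x, z⟫) ∂ν := by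
  -- Fubini needs an s-finite measure, while `ν` may have infinite mass at the origin; but there
  -- the integrands vanish.
  have := sigmaFinite_restrict_compl_zero hν
  calc ∫ t in (0 : ℝ)..1, jumpExponent ν (t • x)
      = ∫ t in (0 : ℝ)..1, jumpExponent (ν.restrict {0}ᶜ) (t • x) := by
        simp only [jumpExponent_restrict_compl_zero]
    _ = ∫ t in (0 : ℝ)..1, ∫ z in {0}ᶜ, (1 - Real.cos (t * ⟪x, z⟫)) ∂ν := by
        simp only [jumpExponent, real_inner_smul_left]
    _ = ∫ z in {0}ᶜ, (∫ t in (0 : ℝ)..1, (1 - Real.cos (t * ⟪x, z⟫))) ∂ν :=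
        intervalIntegral_integral_swap <| by
          rw [uIoc_of_le zero_le_one]
          exact integrable_prod_one_sub_cos_mul_inner hν.restrict x
    _ = ∫ z in {0}ᶜ, (1 - Real.sinc ⟪x, z⟫) ∂ν := by
        simp only [intervalIntegral_one_sub_cos_mul]
    _ = ∫ z, (1 - Real.sinc ⟪x, z⟫) ∂ν :=
        setIntegral_compl_singleton_eq_integral (by simp)

theorem integral_one_sub_sinc_inner_le (hν : Integrable (fun z => min 1 (‖z‖ ^ 2)) ν)
    {r M : ℝ} (hM : ∀ y : E, ‖y‖ ≤ r → jumpExponent ν y ≤ M) {x : E} (hx : ‖x‖ ≤ r) :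
    ∫ z, (1 - Real.sinc ⟪x, z⟫) ∂ν ≤ M := by
  have norm_jumpExponent_le : ∀ t ∈ uIoc (0 : ℝ) 1, ‖jumpExponent ν (t • x)‖ ≤ M := by
    intro t ht
    rw [uIoc_of_le zero_le_one] at ht
    rw [Real.norm_of_nonneg (jumpExponent_nonneg _)]
    exact hM _ ((norm_smul_le_norm_of_mem_Icc (Ioc_subset_Icc_self ht) x).trans hx)
  rw [← intervalIntegral_jumpExponent_smul hν]
  simpa using (Real.le_norm_self _).trans
    (intervalIntegral.norm_integral_le_of_norm_le_const norm_jumpExponent_le)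

theorem integral_min_one_norm_mul_sq_le [FiniteDimensional ℝ E]
    (hν : Integrable (fun z => min 1 (‖z‖ ^ 2)) ν) {r M : ℝ} (hr : 0 ≤ r)
    (hM : ∀ x : E, ‖x‖ ≤ r → jumpExponent ν x ≤ M) :
    ∫ z, min 1 ((‖z‖ * r) ^ 2) ∂ν ≤ 8 * Module.finrank ℝ E * M := by
  let b := stdOrthonormalBasis ℝ E
  have integrable_term (i) : Integrable (fun z => 8 * (1 - Real.sinc ⟪r • b i, z⟫)) ν :=
    (integrable_one_sub_sinc_inner hν _).const_mul 8
  have norm_axis_le (i) : ‖r • b i‖ ≤ r := by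
    rw [norm_smul, b.norm_eq_one, mul_one, Real.norm_of_nonneg hr]
  calc ∫ z, min 1 ((‖z‖ * r) ^ 2) ∂ν
      ≤ ∫ z, ∑ i, 8 * (1 - Real.sinc ⟪r • b i, z⟫) ∂ν :=
        integral_mono (integrable_min_one_norm_mul_sq hν r)
          (integrable_finsetSum _ fun i _ => integrable_term i)
          fun z => min_one_norm_mul_sq_le_sum_one_sub_sinc b z r
    _ = ∑ i, 8 * ∫ z, (1 - Real.sinc ⟪r • b i, z⟫) ∂ν := by
        rw [integral_finsetSum _ fun i _ => integrable_term i]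
        simp only [integral_const_mul]
    _ ≤ ∑ _i : Fin (Module.finrank ℝ E), 8 * M := by
        gcongr with i
        exact integral_one_sub_sinc_inner_le hν hM (norm_axis_le i)
    _ = 8 * Module.finrank ℝ E * M := by
        rw [Finset.sum_const, Finset.card_univ, Fintype.card_fin, nsmul_eq_mul]
        ring

theorem stmt_7_general [FiniteDimensional ℝ E]
    (hν : Integrable (fun z => min 1 (‖z‖ ^ 2)) ν) {r : ℝ} (hr : 0 ≤ r) :
    1 / (4 * (1 + 2 * (Module.finrank ℝ E : ℝ))) * ∫ z, min 1 ((‖z‖ * r) ^ 2) ∂ν ≤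
        sSup (jumpExponent ν '' {x | ‖x‖ ≤ r}) ∧
      sSup (jumpExponent ν '' {x | ‖x‖ ≤ r}) ≤ 2 * ∫ z, min 1 ((‖z‖ * r) ^ 2) ∂ν := by
  have upper : ∀ y ∈ jumpExponent ν '' {x | ‖x‖ ≤ r}, y ≤ 2 * ∫ z, min 1 ((‖z‖ * r) ^ 2) ∂ν :=
    forall_mem_image.2 fun _ => jumpExponent_le_two_mul_integral hν
  have zero_mem : 0 ∈ jumpExponent ν '' {x | ‖x‖ ≤ r} := ⟨0, by simpa using hr, jumpExponent_zero⟩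
  refine ⟨?_, csSup_le ⟨0, zero_mem⟩ upper⟩
  set M := sSup (jumpExponent ν '' {x | ‖x‖ ≤ r})
  have M_nonneg : 0 ≤ M := le_csSup ⟨_, upper⟩ zero_mem
  have moment_le := integral_min_one_norm_mul_sq_le hν hr fun x hx =>
    le_csSup ⟨_, upper⟩ (mem_image_of_mem (jumpExponent ν) hx)
  rw [one_div, inv_mul_le_iff₀ (by positivity)]
  linarith

end InnerProductSpace

/-- Two-sided bound for the supremum of the jump part of a symmetric characteristic
exponent in terms of the truncated second moment of the Lévy measure. -/
theorem stmt_7 {d : ℕ} (ν : Measure (EuclideanSpace ℝ (Fin d)))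
    (h0 : ν {0} = 0)
    (hint : Integrable (fun z => min 1 (‖z‖ ^ 2)) ν)
    (ψ : EuclideanSpace ℝ (Fin d) → ℝ)
    (hψ : ∀ x, ψ x = ∫ z, (1 - Real.cos ⟪x, z⟫) ∂ν) :
    ∀ r : ℝ, 0 < r →
      (1 / (4 * (1 + 2 * (d : ℝ)))) * ∫ z, min 1 ((‖z‖ * r) ^ 2) ∂ν ≤
        sSup (ψ '' {x | ‖x‖ ≤ r}) ∧
      sSup (ψ '' {x | ‖x‖ ≤ r}) ≤ 2 * ∫ z, min 1 ((‖z‖ * r) ^ 2) ∂ν := by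
  obtain rfl : ψ = jumpExponent ν := funext hψ
  exact fun r hr => by simpa only [finrank_euclideanSpace_fin] using stmt_7_general hint hr.le
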